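/- arXiv:1501.05753 — 2 statements merged into one kernel-verified Lean document; each statement's English description precedes it below -/
import Mathlib

section
/- Let A be a unital C*-algebra and a ∈ A. Let θ : [0,∞) → [0,∞) be continuous on (0,∞), with θ(t) > 0 for all t ≠ 0 and θ(t) → +∞ as t → 0⁺. Let (h_n) be a decreasing sequence of continuous functions h_n : [0,∞) → [0,1] converging pointwise to the characteristic function of {0}. Let m ∈ ℝ_+ and let Λ_{a,m,θ} be the set of traces τ on A with τ(θ(|a|)) ≤ m. Then for every τ ∈ Λ_{a,m,θ} the sequence (τ(h_n(|a|)))_n converges to dim_τ(ker a), and the convergence is uniform on Λ_{a,m,θ}. -/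
open scoped ComplexOrder ENNReal
open Filter Topology Matrix

set_option synthInstance.maxHeartbeats 1000000
set_option maxHeartbeats 1000000

noncomputable section

/-- A (finite positive) trace on a unital C*-algebra `A`: a positive linear functional
`τ : A → ℂ` satisfying `τ (x * y) = τ (y * x)`. -/
def IsCStarTrace {A : Type*} [CStarAlgebra A] (τ : A → ℂ) : Prop :=
  (∀ x y : A, τ (x + y) = τ x + τ y) ∧ (∀ (c : ℂ) (x : A), τ (c • x) = c * τ x) ∧
  (∀ x : A, 0 ≤ τ (star x * x)) ∧ (∀ x y : A, τ (x * y) = τ (y * x))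

/-- `|x| = (x* x)^{1/2}`, via the continuous functional calculus. -/
def cfcAbs {A : Type*} [CStarAlgebra A] (x : A) : A := cfc Real.sqrt (star x * x)

/-- `dim_τ(ker x) := inf { τ(h(|x|)) : h : [0,∞) → [0,1] continuous, h 0 = 1 }`. -/
def traceKerDim {A : Type*} [CStarAlgebra A] (τ : A → ℂ) (x : A) : ℝ :=
  sInf {r : ℝ | ∃ h : ℝ → ℝ, ContinuousOn h (Set.Ici 0) ∧
    (∀ t ∈ Set.Ici (0:ℝ), h t ∈ Set.Icc (0:ℝ) 1) ∧ h 0 = 1 ∧ r = (τ (cfc h (cfcAbs x))).re}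

/-- `τ(θ(|a|)) := sup { τ(g(|a|)) : g : [0,∞) → ℝ continuous, g ≤ θ } ∈ ℝ ∪ {+∞}`, for a
lower semicontinuous `θ`. -/
def traceLsc {A : Type*} [CStarAlgebra A] (τ : A → ℂ) (x : A) (θ : ℝ → ℝ) : EReal :=
  ⨆ g ∈ {g : ℝ → ℝ | ContinuousOn g (Set.Ici 0) ∧ ∀ t ∈ Set.Ici (0:ℝ), g t ≤ θ t},
    ((τ (cfc g (cfcAbs x))).re : EReal)

lemma aux_unif (θ : ℝ → ℝ)
    (hθc : ContinuousOn θ (Set.Ioi 0))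
    (hθpos : ∀ t : ℝ, 0 < t → 0 < θ t)
    (hθtop : Tendsto θ (𝓝[>] 0) atTop)
    (h : ℕ → ℝ → ℝ) (hhc : ∀ n, ContinuousOn (h n) (Set.Ici 0))
    (hh01 : ∀ n, ∀ t ∈ Set.Ici (0:ℝ), h n t ∈ Set.Icc (0:ℝ) 1)
    (hhanti : ∀ t ∈ Set.Ici (0:ℝ), Antitone fun n => h n t)
    (hhlim0 : ∀ t : ℝ, 0 < t → Tendsto (fun n => h n t) atTop (𝓝 0))
    (R δ : ℝ) (hδ : 0 < δ) :
    ∃ N, ∀ n ≥ N, ∀ t, 0 < t → t ≤ R → h n t ≤ δ * θ t := by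
  have h1 := hθtop.eventually_ge_atTop (1/δ)
  obtain ⟨r, hr, hr'⟩ := mem_nhdsGT_iff_exists_Ioo_subset.1 h1
  have hr0 : (0:ℝ) < r := hr
  have hsub : Set.Icc r R ⊆ Set.Ioi 0 := fun t ht => lt_of_lt_of_le hr0 ht.1
  have hc : ∃ c > 0, ∀ t ∈ Set.Icc r R, c ≤ θ t := by
    rcases (Set.Icc r R).eq_empty_or_nonempty with he | hne
    · exact ⟨1, one_pos, by simp [he]⟩
    · obtain ⟨x, hx, hmin⟩ := isCompact_Icc.exists_isMinOn hne (hθc.mono hsub)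
      exact ⟨θ x, hθpos x (hsub hx), fun t ht => hmin ht⟩
  obtain ⟨c, hc0, hc⟩ := hc
  have hD : TendstoUniformlyOn h (fun _ => (0:ℝ)) atTop (Set.Icc r R) := by
    apply Antitone.tendstoUniformlyOn_of_forall_tendsto isCompact_Icc
    · exact fun n => (hhc n).mono fun t ht => le_of_lt (show (0:ℝ) < t from hsub ht)
    · exact fun t ht => hhanti t (le_of_lt (show (0:ℝ) < t from hsub ht))
    · exact continuousOn_const
    · exact fun t ht => hhlim0 t (hsub ht)
  obtain ⟨N, hN⟩ := eventually_atTop.1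
    (Metric.tendstoUniformlyOn_iff.1 hD (δ * c) (mul_pos hδ hc0))
  refine ⟨N, fun n hn t ht htR => ?_⟩
  rcases lt_or_ge t r with htr | htr
  · have h2 : 1/δ ≤ θ t := hr' ⟨ht, htr⟩
    have h3 := (hh01 n t ht.le).2
    have : 1 ≤ δ * θ t := by
      rw [div_le_iff₀ hδ] at h2
      linarith
    linarith
  · have h2 := hN n hn t ⟨htr, htR⟩
    rw [dist_comm, Real.dist_eq, sub_zero] at h2
    have h3 := hc t ⟨htr, htR⟩
    have h4 : δ * c ≤ δ * θ t := by gcongr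
    linarith [le_abs_self (h n t)]

lemma aux_abs {A : Type*} [CStarAlgebra A] (a : A) :
    IsSelfAdjoint (cfcAbs a) ∧ (∀ t ∈ spectrum ℝ (cfcAbs a), 0 ≤ t) ∧
    ∃ R, ∀ t ∈ spectrum ℝ (cfcAbs a), t ≤ R := by
  have hb : IsSelfAdjoint (star a * a) := IsSelfAdjoint.star_mul_self a
  refine ⟨cfc_predicate _ _, ?_, ?_⟩
  · intro t ht
    unfold cfcAbs at ht
    rw [cfc_map_spectrum (R := ℝ) Real.sqrt (star a * a) hb
      Real.continuous_sqrt.continuousOn] at ht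
    obtain ⟨x, -, rfl⟩ := ht
    exact Real.sqrt_nonneg x
  · obtain ⟨R, hR⟩ := (spectrum.isCompact (𝕜 := ℝ) (cfcAbs a)).bddAbove
    exact ⟨R, fun t ht => hR ht⟩

lemma aux_nonneg {A : Type*} [CStarAlgebra A] (a : A) (τ : A → ℂ) (hτ : IsCStarTrace τ)
    (k : ℝ → ℝ) (hk : ContinuousOn k (Set.Ici 0)) (hk0 : ∀ t ∈ Set.Ici (0:ℝ), 0 ≤ k t) :
    0 ≤ (τ (cfc k (cfcAbs a))).re := by
  obtain ⟨hsa, hpos, -⟩ := aux_abs a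
  have hks : ContinuousOn (fun t => Real.sqrt (k t)) (spectrum ℝ (cfcAbs a)) :=
    (Real.continuous_sqrt.comp_continuousOn hk).mono hpos
  have e : cfc k (cfcAbs a) = star (cfc (fun t => Real.sqrt (k t)) (cfcAbs a)) *
      cfc (fun t => Real.sqrt (k t)) (cfcAbs a) := by
    rw [(cfc_predicate (R := ℝ) (p := IsSelfAdjoint) (fun t => Real.sqrt (k t)) (cfcAbs a)).star_eq,
      ← cfc_mul _ _ _ hks hks]
    apply cfc_congr
    intro t ht
    exact (Real.mul_self_sqrt (hk0 t (hpos t ht))).symm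
  rw [e]
  exact (Complex.le_def.1 (hτ.2.2.1 _)).1

lemma aux_main {A : Type*} [CStarAlgebra A] (a : A) (τ : A → ℂ) (hτ : IsCStarTrace τ)
    (θ : ℝ → ℝ) (hθ0 : ∀ t ∈ Set.Ici (0:ℝ), 0 ≤ θ t) (m : ℝ)
    (hm : traceLsc τ a θ ≤ (m : EReal)) (R : ℝ) (hR : ∀ t ∈ spectrum ℝ (cfcAbs a), t ≤ R)
    (f k : ℝ → ℝ) (hf : ContinuousOn f (Set.Ici 0)) (hk : ContinuousOn k (Set.Ici 0))
    (hfk0 : f 0 = k 0) (hk0 : ∀ t ∈ Set.Ici (0:ℝ), 0 ≤ k t) (δ : ℝ) (hδ : 0 < δ)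
    (hfθ : ∀ t, 0 < t → t ≤ R + 1 → f t ≤ δ * θ t) :
    (τ (cfc f (cfcAbs a))).re ≤ (τ (cfc k (cfcAbs a))).re + δ * m := by
  obtain ⟨hsa, hpos, -⟩ := aux_abs a
  set g : ℝ → ℝ := fun t => max 0 (min 1 (R + 1 - t)) * (δ⁻¹ * (f t - k t)) with hg
  have hgc : ContinuousOn g (Set.Ici 0) := by
    apply ContinuousOn.mul
    · exact Continuous.continuousOn (by fun_prop)
    · exact continuousOn_const.mul (hf.sub hk)
  have hgθ : ∀ t ∈ Set.Ici (0:ℝ), g t ≤ θ t := by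
    intro t ht
    have hp0 : 0 ≤ max 0 (min 1 (R + 1 - t)) := le_max_left _ _
    have hp1 : max 0 (min 1 (R + 1 - t)) ≤ 1 := max_le zero_le_one (min_le_left _ _)
    rcases le_or_gt (f t - k t) 0 with hneg | hposi
    · refine le_trans ?_ (hθ0 t ht)
      exact mul_nonpos_of_nonneg_of_nonpos hp0
        (mul_nonpos_of_nonneg_of_nonpos (inv_pos.2 hδ).le hneg)
    · rcases le_or_gt t (R + 1) with htR | htR
      · have ht0 : 0 < t := by
          rcases (show (0:ℝ) ≤ t from ht).eq_or_lt with h0 | h0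
          · rw [← h0, hfk0] at hposi
            simp at hposi
          · exact h0
        have h1 := hfθ t ht0 htR
        have h2 := hk0 t ht
        have h3 : δ⁻¹ * (f t - k t) ≤ θ t := by
          rw [inv_mul_le_iff₀ hδ]
          linarith
        have h4 : 0 ≤ δ⁻¹ * (f t - k t) := mul_nonneg (inv_pos.2 hδ).le hposi.le
        calc g t ≤ 1 * (δ⁻¹ * (f t - k t)) := mul_le_mul_of_nonneg_right hp1 h4
          _ ≤ θ t := by rw [one_mul]; exact h3
      · have : max 0 (min 1 (R + 1 - t)) = 0 :=
          max_eq_left ((min_le_right _ _).trans (by linarith))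
        simp only [hg, this, zero_mul]
        exact hθ0 t ht
  have hgm : (τ (cfc g (cfcAbs a))).re ≤ m := by
    have : ((τ (cfc g (cfcAbs a))).re : EReal) ≤ (m : EReal) := by
      refine le_trans ?_ hm
      unfold traceLsc
      exact le_iSup₂_of_le g ⟨hgc, hgθ⟩ le_rfl
    exact EReal.coe_le_coe_iff.1 this
  have e : cfc f (cfcAbs a) = cfc k (cfcAbs a) + (δ : ℂ) • cfc g (cfcAbs a) := by
    have e1 : (δ : ℂ) • cfc g (cfcAbs a) = δ • cfc g (cfcAbs a) :=
      Complex.coe_smul δ _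
    rw [e1, ← cfc_smul δ g (cfcAbs a) (hgc.mono hpos), ← cfc_add (cfcAbs a) k (fun x => δ • g x) (hk.mono hpos)
      ((hgc.mono hpos).const_smul δ)]
    apply cfc_congr
    intro t ht
    have : max 0 (min 1 (R + 1 - t)) = 1 := by
      rw [min_eq_left (by linarith [hR t ht])]
      simp
    simp only [hg, this, smul_eq_mul]
    field_simp
    ring
  rw [e, hτ.1, hτ.2.1, Complex.add_re, Complex.re_ofReal_mul]
  gcongr

/-- with `θ` continuous on `(0,∞)`, positive away from `0` and tending to
`+∞` at `0⁺`, and `h_n` a decreasing sequence of continuous `[0,1]`-valued functions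
converging pointwise to the characteristic function of `{0}`, the sequence
`τ(h_n(|a|))` converges to `dim_τ(ker a)` for every `τ ∈ Λ_{a,m,θ}`, uniformly on
`Λ_{a,m,θ} = {τ : τ(θ(|a|)) ≤ m}`. -/
theorem stmt13 {A : Type*} [CStarAlgebra A] (a : A) (θ : ℝ → ℝ)
    (hθc : ContinuousOn θ (Set.Ioi 0)) (hθ0 : ∀ t ∈ Set.Ici (0:ℝ), 0 ≤ θ t)
    (hθpos : ∀ t : ℝ, 0 < t → 0 < θ t)
    (hθtop : Tendsto θ (𝓝[>] 0) atTop)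
    (h : ℕ → ℝ → ℝ) (hhc : ∀ n, ContinuousOn (h n) (Set.Ici 0))
    (hh01 : ∀ n, ∀ t ∈ Set.Ici (0:ℝ), h n t ∈ Set.Icc (0:ℝ) 1)
    (hhanti : ∀ t ∈ Set.Ici (0:ℝ), Antitone fun n => h n t)
    (hhlim0 : ∀ t : ℝ, 0 < t → Tendsto (fun n => h n t) atTop (𝓝 0))
    (hhlim1 : Tendsto (fun n => h n 0) atTop (𝓝 1))
    (m : ℝ) (hm : 0 ≤ m) :
    (∀ τ ∈ {τ : A → ℂ | IsCStarTrace τ ∧ traceLsc τ a θ ≤ (m : EReal)},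
      Tendsto (fun n => (τ (cfc (h n) (cfcAbs a))).re) atTop (𝓝 (traceKerDim τ a))) ∧
    TendstoUniformlyOn (fun n (τ : A → ℂ) => (τ (cfc (h n) (cfcAbs a))).re)
      (fun τ => traceKerDim τ a) atTop
      {τ : A → ℂ | IsCStarTrace τ ∧ traceLsc τ a θ ≤ (m : EReal)} := by
  obtain ⟨hsa, hpos, R, hR⟩ := aux_abs a
  have hn0 : ∀ n, h n 0 = 1 := fun n => le_antisymm (hh01 n 0 Set.self_mem_Ici).2
    ((hhanti 0 Set.self_mem_Ici).le_of_tendsto hhlim1 n)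
  have key : TendstoUniformlyOn (fun n (τ : A → ℂ) => (τ (cfc (h n) (cfcAbs a))).re)
      (fun τ => traceKerDim τ a) atTop
      {τ : A → ℂ | IsCStarTrace τ ∧ traceLsc τ a θ ≤ (m : EReal)} := by
    rw [Metric.tendstoUniformlyOn_iff]
    intro ε hε
    have hδ : 0 < ε / (2 * (m + 1)) := by positivity
    have hδm : ε / (2 * (m + 1)) * m < ε := by
      rw [div_mul_eq_mul_div, div_lt_iff₀ (by positivity)]
      nlinarith
    obtain ⟨N, hN⟩ := aux_unif θ hθc hθpos hθtop h hhc hh01 hhanti hhlim0 (R + 1) _ hδ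
    filter_upwards [eventually_ge_atTop N] with n hn τ hτ
    obtain ⟨hτ, hτm⟩ := hτ
    have hle : traceKerDim τ a ≤ (τ (cfc (h n) (cfcAbs a))).re := by
      apply csInf_le
      · refine ⟨0, ?_⟩
        rintro r ⟨k, hk, hk01, -, rfl⟩
        exact aux_nonneg a τ hτ k hk fun t ht => (hk01 t ht).1
      · exact ⟨h n, hhc n, hh01 n, hn0 n, rfl⟩
    have hge : (τ (cfc (h n) (cfcAbs a))).re - ε / (2 * (m + 1)) * m ≤ traceKerDim τ a := by
      apply le_csInf
      · exact ⟨_, h n, hhc n, hh01 n, hn0 n, rfl⟩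
      · rintro r ⟨k, hk, hk01, hk1, rfl⟩
        have := aux_main a τ hτ θ hθ0 m hτm R hR (h n) k (hhc n) hk ((hn0 n).trans hk1.symm)
          (fun t ht => (hk01 t ht).1) _ hδ (hN n hn)
        linarith
    rw [Real.dist_eq, abs_lt]
    constructor <;> linarith
  exact ⟨fun τ hτ => key.tendsto_at hτ, key⟩

end
end

section
/- Let a ∈ M_n(ℚ̄F_∞), regarded as an element of M_n(ℂF_∞) via the inclusion ℚ̄ ⊂ ℂ. Then there exists a constant m ∈ ℝ such that for every trace φ on F_∞ with φ(1) = 1 satisfying Lück's condition, (φ ⊗ Tr_n)(ln_+|a|) ≥ m. -/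
open scoped ComplexOrder ENNReal
open Filter Topology Matrix

set_option synthInstance.maxHeartbeats 1000000
set_option maxHeartbeats 1000000

noncomputable section

instance piLpCompleteSpace {ι : Type*} [Fintype ι] (p : ℝ≥0∞) (β : ι → Type*)
    [∀ i, UniformSpace (β i)] [∀ i, CompleteSpace (β i)] : CompleteSpace (PiLp p β) :=
  PiLp.completeSpace p β

/-- `φ : G → ℂ` is of positive type: for every finite family `g₁, …, g_m` of elements of
`G`, the matrix `(φ (gᵢ⁻¹ gⱼ))_{i,j}` is positive semidefinite. -/
def IsPosType {G : Type*} [Group G] (φ : G → ℂ) : Prop :=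
  ∀ (m : ℕ) (g : Fin m → G), (Matrix.of fun i j => φ ((g i)⁻¹ * g j)).PosSemidef

/-- A trace on a (discrete) group: a function of positive type, constant on conjugacy
classes. -/
def IsGroupTrace {G : Type*} [Group G] (φ : G → ℂ) : Prop :=
  IsPosType φ ∧ ∀ g h : G, φ (h * g * h⁻¹) = φ g

/-- GNS representation data for a function `φ` on a group `G`: a Hilbert space `H`, a
unital algebra morphism `π` from `ℂG = MonoidAlgebra ℂ G` to the bounded operators on `H`
sending group elements to unitaries (this is the condition `star_of`), and a cyclic vector
`ξ` whose matrix coefficient is (the linear extension of) `φ`. -/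
structure GNSRep (G : Type*) [Group G] (φ : G → ℂ) where
  H : Type
  [instNormed : NormedAddCommGroup H]
  [instInner : InnerProductSpace ℂ H]
  [instComplete : CompleteSpace H]
  π : MonoidAlgebra ℂ G →ₐ[ℂ] (H →L[ℂ] H)
  ξ : H
  star_of : ∀ g : G, star (π (MonoidAlgebra.of ℂ G g)) = π (MonoidAlgebra.of ℂ G g⁻¹)
  inner_eq : ∀ g : G, (inner ℂ ξ (π (MonoidAlgebra.of ℂ G g) ξ) : ℂ) = φ g
  cyclic : Dense (Set.range fun x : MonoidAlgebra ℂ G => π x ξ)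

attribute [instance] GNSRep.instNormed GNSRep.instInner GNSRep.instComplete

/-- The vector `ξᵢ ∈ Hⁿ`: the cyclic vector `ξ` in the `i`-th summand, `0` elsewhere. -/
def GNSRep.vec {G : Type*} [Group G] {φ : G → ℂ} (R : GNSRep G φ) {n : ℕ} (i : Fin n) :
    PiLp 2 (fun _ : Fin n => R.H) :=
  (PiLp.continuousLinearEquiv 2 ℂ (fun _ : Fin n => R.H)).symm (Pi.single i R.ξ)

/-- The set of continuous majorants of `ln₊` on `[0,∞)`.  (Recall that `Real.log 0 = 0`,
so that `Real.log` agrees with `ln₊` on `[0,∞)`.) -/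
def lnPlusMajorants : Set (ℝ → ℝ) :=
  {g | ContinuousOn g (Set.Ici 0) ∧ ∀ t ∈ Set.Ici (0:ℝ), Real.log t ≤ g t}

/-- The action of a matrix `a ∈ Mₙ(R)` on the Hilbert space `H'ⁿ` (with its `ℓ²` inner
product) induced by a morphism `π : R → B(H')`: `(π_n(a) v)_i = Σ_j π(a i j) (v j)`. -/
def matAct {R H' : Type*} [Ring R] [Algebra ℂ R] [NormedAddCommGroup H']
    [InnerProductSpace ℂ H'] {n : ℕ}
    (π : R →ₐ[ℂ] (H' →L[ℂ] H')) (a : Matrix (Fin n) (Fin n) R) :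
    PiLp 2 (fun _ : Fin n => H') →L[ℂ] PiLp 2 (fun _ : Fin n => H') :=
  (PiLp.continuousLinearEquiv 2 ℂ _).symm.toContinuousLinearMap ∘L
    (ContinuousLinearMap.pi fun i => ∑ j, (π (a i j)).comp (ContinuousLinearMap.proj j)) ∘L
    (PiLp.continuousLinearEquiv 2 ℂ _).toContinuousLinearMap

/-- `(φ ⊗ Trₙ)(ln₊ |a|) := inf { Σᵢ ⟨ξᵢ, g(|π(a)|) ξᵢ⟩ : g : [0,∞) → ℝ continuous, g ≥ ln₊ }`,
an element of `ℝ ∪ {−∞}`, computed in the GNS representation `R`. -/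
def GNSRep.lnPlusQ {G : Type*} [Group G] {φ : G → ℂ} (R : GNSRep G φ) {n : ℕ}
    (a : Matrix (Fin n) (Fin n) (MonoidAlgebra ℂ G)) : EReal :=
  ⨅ g ∈ lnPlusMajorants,
    ((∑ i, (inner ℂ (R.vec i) (cfc g (cfcAbs (matAct R.π a)) (R.vec i)) : ℂ)).re : EReal)

/-- A function `φ` on `G` satisfies Lück's condition if `(φ ⊗ Trₙ)(ln₊|a|) ≥ 0` for every
`n ≥ 1` and every `a ∈ Mₙ(ℤG)` (an `a ∈ Mₙ(ℂG)` whose coefficients are all integers),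
where the quantity is computed in any GNS representation of `φ`. -/
def SatisfiesLueck {G : Type*} [Group G] (φ : G → ℂ) : Prop :=
  ∀ (n : ℕ), 0 < n → ∀ a : Matrix (Fin n) (Fin n) (MonoidAlgebra ℂ G),
    (∀ (i j : Fin n) (g : G), ∃ m : ℤ, (a i j).coeff g = (m : ℂ)) →
    ∀ R : GNSRep G φ, 0 ≤ R.lnPlusQ a

lemma aux_cfc_agree {A B : Type*} [CStarAlgebra A] [CStarAlgebra B] (P : A) (Q : B)
    (hP : IsSelfAdjoint P) (hQ : IsSelfAdjoint Q) (L : A →L[ℝ] ℝ) (L' : B →L[ℝ] ℝ)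
    (h : ∀ k : ℕ, L (P ^ k) = L' (Q ^ k)) (f : ℝ → ℝ) (hf : Continuous f) :
    L (cfc f P) = L' (cfc f Q) := by
  obtain ⟨R, hR⟩ : ∃ R : ℝ, ∀ x, x ∈ spectrum ℝ P ∨ x ∈ spectrum ℝ Q → x ∈ Set.Icc (-R) R := by
    have h1 : IsCompact (spectrum ℝ P ∪ spectrum ℝ Q) :=
      (spectrum.isCompact P).union (spectrum.isCompact Q)
    obtain ⟨R, hR⟩ := h1.isBounded.exists_norm_le
    exact ⟨R, fun x hx => abs_le.mp (hR x hx)⟩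
  have hpoly : ∀ p : Polynomial ℝ, L (Polynomial.aeval P p) = L' (Polynomial.aeval Q p) := by
    intro p
    rw [Polynomial.aeval_eq_sum_range, Polynomial.aeval_eq_sum_range, map_sum, map_sum]
    exact Finset.sum_congr rfl fun i _ => by rw [map_smul, map_smul, h]
  have key : ∀ η : ℝ, 0 < η → |L (cfc f P) - L' (cfc f Q)| ≤ (‖L‖ + ‖L'‖) * η := by
    intro η hη
    obtain ⟨p, hp⟩ := exists_polynomial_near_of_continuousOn (-R) R f hf.continuousOn η hη
    have e1 : ‖cfc f P - Polynomial.aeval P p‖ ≤ η := by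
      rw [← cfc_polynomial p P, ← cfc_sub f _ P hf.continuousOn p.continuous.continuousOn]
      refine norm_cfc_le hη.le fun x hx => ?_
      rw [Real.norm_eq_abs, abs_sub_comm]
      exact (hp x (hR x (Or.inl hx))).le
    have e2 : ‖cfc f Q - Polynomial.aeval Q p‖ ≤ η := by
      rw [← cfc_polynomial p Q, ← cfc_sub f _ Q hf.continuousOn p.continuous.continuousOn]
      refine norm_cfc_le hη.le fun x hx => ?_
      rw [Real.norm_eq_abs, abs_sub_comm]
      exact (hp x (hR x (Or.inr hx))).le
    have e3 : L (cfc f P) - L' (cfc f Q) =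
        L (cfc f P - Polynomial.aeval P p) - L' (cfc f Q - Polynomial.aeval Q p) := by
      rw [map_sub, map_sub, hpoly]; ring
    rw [e3]
    have f1 := (L.le_opNorm (cfc f P - Polynomial.aeval P p)).trans
      (mul_le_mul_of_nonneg_left e1 (norm_nonneg _))
    have f2 := (L'.le_opNorm (cfc f Q - Polynomial.aeval Q p)).trans
      (mul_le_mul_of_nonneg_left e2 (norm_nonneg _))
    rw [Real.norm_eq_abs] at f1 f2
    calc _ ≤ _ := abs_sub _ _
      _ ≤ _ := add_le_add f1 f2
      _ = _ := by ring
  by_contra hne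
  have hpos : 0 < |L (cfc f P) - L' (cfc f Q)| := abs_pos.mpr (sub_ne_zero.mpr hne)
  set d := |L (cfc f P) - L' (cfc f Q)|
  have hc : 0 ≤ ‖L‖ + ‖L'‖ := by positivity
  have := key (d / (2 * (‖L‖ + ‖L'‖ + 1))) (by positivity)
  have h2 : (‖L‖ + ‖L'‖) * (d / (2 * (‖L‖ + ‖L'‖ + 1))) < d := by
    rw [mul_div_assoc', div_lt_iff₀ (by positivity)]
    nlinarith
  linarith

section ord
variable {A : Type*} [CStarAlgebra A] [PartialOrder A] [StarOrderedRing A]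

lemma aux_sp (S : A) (hS : 0 ≤ S) (ε : ℝ) (hε : 0 < ε) :
    IsStrictlyPositive (S + algebraMap ℝ A ε) := by
  refine IsStrictlyPositive.nonneg_add hS ?_
  exact ⟨by
    have := smul_nonneg hε.le (zero_le_one (α := A))
    rwa [Algebra.algebraMap_eq_smul_one], (IsUnit.mk0 ε hε.ne').map (algebraMap ℝ A)⟩

lemma aux_log_mono (ε : ℝ) (hε : 0 < ε) (S T : A) (hS : 0 ≤ S) (hST : S ≤ T) :
    cfc (fun s : ℝ => Real.log (|s| + ε)) S ≤ cfc (fun s : ℝ => Real.log (|s| + ε)) T := by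
  have key : ∀ S : A, 0 ≤ S → cfc (fun s : ℝ => Real.log (|s| + ε)) S =
      CFC.log (S + algebraMap ℝ A ε) := by
    intro S hS
    have e : S + algebraMap ℝ A ε = cfc (fun s : ℝ => s + ε) S := by
      rw [cfc_add_const ε (fun s => s) S, cfc_id' ℝ S]
    rw [CFC.log, e, ← cfc_comp' Real.log (fun s : ℝ => s + ε) S ?_]
    · apply cfc_congr
      intro x hx
      simp only
      rw [abs_of_nonneg (spectrum_nonneg_of_nonneg hS hx)]
    · rintro y ⟨x, hx, rfl⟩
      have := spectrum_nonneg_of_nonneg hS hx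
      exact (Real.continuousAt_log (by simp only; positivity)).continuousWithinAt
  rw [key S hS, key T (hS.trans hST)]
  exact CFC.log_le_log (by gcongr) (aux_sp S hS ε hε)

lemma aux_inv_mono (δ : ℝ) (hε : 0 < δ) (S T : A) (hS : 0 ≤ S) (hST : S ≤ T) :
    cfc (fun s : ℝ => -(δ / (|s| + δ))) S ≤ cfc (fun s : ℝ => -(δ / (|s| + δ))) T := by
  have key : ∀ S : A, 0 ≤ S → cfc (fun s : ℝ => -(δ / (|s| + δ))) S =
      -(δ • Ring.inverse (S + algebraMap ℝ A δ)) := by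
    intro S hS
    have e : S + algebraMap ℝ A δ = cfc (fun s : ℝ => |s| + δ) S := by
      rw [cfc_add_const δ (fun s => |s|) S]
      congr 1
      conv_lhs => rw [← cfc_id' ℝ S]
      refine cfc_congr fun x hx => (abs_of_nonneg (spectrum_nonneg_of_nonneg hS hx)).symm
    have hne : ∀ x : ℝ, |x| + δ ≠ 0 := fun x => by positivity
    have hc : Continuous fun x : ℝ => (|x| + δ)⁻¹ := Continuous.inv₀ (by fun_prop) hne
    rw [e, ← cfc_inv (fun s : ℝ => |s| + δ) S (fun x _ => hne x), cfc_neg, neg_inj,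
      ← cfc_smul δ _ S hc.continuousOn]
    rfl
  rw [key S hS, key T (hS.trans hST)]
  have := CStarAlgebra.ringInverse_le_ringInverse
    (show S + algebraMap ℝ A δ ≤ T + algebraMap ℝ A δ by gcongr) (aux_sp S hS δ hε)
  exact neg_le_neg (smul_le_smul_of_nonneg_left this hε.le)
end ord

lemma aux_real (g : ℝ → ℝ) (hg : ContinuousOn g (Set.Ici 0))
    (hlog : ∀ t ∈ Set.Ici (0:ℝ), Real.log t ≤ g t) (M κ : ℝ) (hM : 1 ≤ M) (hκ : 1 ≤ κ) :
    ∃ ε δ : ℝ, 0 < ε ∧ ε < 1 ∧ 0 < δ ∧ ∀ t ∈ Set.Icc 0 M,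
      (1/2 : ℝ) * (Real.log (|κ * t ^ 2| + ε) + (-Real.log ε) * (δ / (|κ⁻¹ * t ^ 2| + δ)))
        ≤ min (g t) (Real.log M) + (1 + (1/2) * Real.log κ) := by
  have hM0 : 0 ≤ Real.log M := Real.log_nonneg hM
  have hκ0 : 0 ≤ Real.log κ := Real.log_nonneg hκ
  have hκp : 0 < κ := by linarith
  have hg0 : 0 ≤ g 0 := by simpa using hlog 0 (by simp)
  obtain ⟨r, hr, hr2, hrg⟩ : ∃ r : ℝ, 0 < r ∧ κ * r ^ 2 ≤ 1/2 ∧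
      ∀ t, 0 ≤ t → t < r → -(1/2) ≤ g t := by
    have h1 := Metric.continuousWithinAt_iff.mp (hg 0 (by simp)) (1/2) (by norm_num)
    obtain ⟨r0, hr0, h2⟩ := h1
    have hb : 0 < 1 / (2 * κ) := by positivity
    refine ⟨min r0 (1 / (2 * κ)), lt_min hr0 hb, ?_, ?_⟩
    · have a1 : min r0 (1 / (2 * κ)) ≤ 1 / (2 * κ) := min_le_right _ _
      have a2 : 0 < min r0 (1 / (2 * κ)) := lt_min hr0 hb
      calc κ * (min r0 (1 / (2 * κ))) ^ 2 ≤ κ * (1 / (2 * κ)) ^ 2 := by gcongr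
        _ = 1 / (4 * κ) := by field_simp; norm_num
        _ ≤ 1 / 2 := by
          apply one_div_le_one_div_of_le <;> linarith
    · intro t ht htr
      have := h2 (show t ∈ Set.Ici 0 from ht)
        (by rw [Real.dist_eq, sub_zero, abs_of_nonneg ht]; exact htr.trans_le (min_le_left _ _))
      rw [Real.dist_eq] at this
      have := (abs_lt.mp this).1
      linarith
  set ε := κ * r ^ 2 with hεdef
  have hε : 0 < ε := by positivity
  set L := -Real.log ε with hL
  have hLp : 0 ≤ L := by
    have := Real.log_nonpos hε.le (by linarith)
    linarith
  have hδ : 0 < ε / (κ ^ 2 * (L + 1)) := by positivity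
  refine ⟨ε, ε / (κ ^ 2 * (L + 1)), hε, by linarith, hδ, ?_⟩
  set δ := ε / (κ ^ 2 * (L + 1)) with hδd
  rintro t ⟨ht0, htM⟩
  have hlog2 : Real.log 2 ≤ 0.7 := by linarith [Real.log_two_lt_d9]
  rw [abs_of_nonneg (by positivity), abs_of_nonneg (by positivity)]
  have hsmall : ε ≤ κ * t ^ 2 → L * (δ / (κ⁻¹ * t ^ 2 + δ)) ≤ 1 := by
    intro h
    have h3 : ε / κ ^ 2 ≤ κ⁻¹ * t ^ 2 := by
      rw [div_le_iff₀ (by positivity)]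
      calc ε ≤ κ * t ^ 2 := h
        _ = κ⁻¹ * t ^ 2 * κ ^ 2 := by field_simp
    have h4 : (L + 1) * δ = ε / κ ^ 2 := by rw [hδd]; field_simp
    rw [mul_div_assoc', div_le_one (by positivity)]
    nlinarith
  rcases lt_or_ge t r with htr | htr
  · have hmin : -(1/2) ≤ min (g t) (Real.log M) := le_min (hrg t ht0 htr) (by linarith)
    rcases lt_or_ge (κ * t ^ 2) ε with hc | hc
    · have b1 : Real.log (κ * t ^ 2 + ε) ≤ Real.log (2 * ε) :=
        Real.log_le_log (by positivity) (by linarith)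
      rw [Real.log_mul (by norm_num) hε.ne'] at b1
      have b2 : L * (δ / (κ⁻¹ * t ^ 2 + δ)) ≤ L := by
        apply mul_le_of_le_one_right hLp
        rw [div_le_one (by positivity)]
        have : 0 ≤ κ⁻¹ * t ^ 2 := by positivity
        linarith
      linarith
    · have b1 : Real.log (κ * t ^ 2 + ε) ≤ 0 := by
        apply Real.log_nonpos (by positivity)
        have : κ * t ^ 2 ≤ κ * r ^ 2 := by gcongr
        linarith
      have := hsmall hc
      linarith
  · have htp : 0 < t := hr.trans_le htr
    have hc : ε ≤ κ * t ^ 2 := by rw [hεdef]; gcongr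
    have b1 : Real.log (κ * t ^ 2 + ε) ≤ Real.log (2 * (κ * t ^ 2)) :=
        Real.log_le_log (by positivity) (by linarith)
    rw [Real.log_mul (by norm_num) (by positivity), Real.log_mul (by positivity) (by positivity),
      Real.log_pow] at b1
    have hmin : Real.log t ≤ min (g t) (Real.log M) :=
      le_min (hlog t ht0) (Real.log_le_log htp htM)
    have := hsmall hc
    push_cast at b1
    linarith

lemma aux_nt (S : Finset ℂ) (hS : ∀ z ∈ S, IsAlgebraic ℚ z) :
    ∃ (r : ℕ) (k0 : Fin r) (s : Fin r → ℂ → ℂ) (W W' V V' : Matrix (Fin r) (Fin r) ℂ),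
      W' * W = 1 ∧ V * V' = 1 ∧ (∀ k, s k 0 = 0) ∧ (∀ z ∈ S, s k0 z = z) ∧
      ∀ z ∈ S, ∀ i j, ∃ m : ℤ, ∑ k, W i k * s k z * V k j = (m : ℂ) := by
  classical
  let K := IntermediateField.adjoin ℚ (S : Set ℂ)
  have : FiniteDimensional ℚ K :=
    IntermediateField.finiteDimensional_adjoin fun z hz => (hS z hz).isIntegral
  let b := Module.finBasis ℚ K
  let r := Module.finrank ℚ K
  obtain ⟨e⟩ : Nonempty (Fin r ≃ (K →ₐ[ℚ] ℂ)) :=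
    ⟨Fintype.equivOfCardEq (by rw [Fintype.card_fin, AlgHom.card])⟩
  obtain ⟨j0, hj0⟩ : ∃ f : K →ₐ[ℚ] ℂ, ∀ x, f x = (x : ℂ) := ⟨K.val, fun _ => rfl⟩
  let s : Fin r → ℂ → ℂ := fun k z => if h : z ∈ K then e k ⟨z, h⟩ else 0
  have hSK : ∀ z ∈ S, z ∈ K := fun z hz => IntermediateField.subset_adjoin ℚ _ hz
  let E : Matrix (Fin r) (Fin r) ℂ := Matrix.of fun i k => e k (b i)
  have hE : E * Eᵀ = (Algebra.traceMatrix ℚ b).map (algebraMap ℚ ℂ) := by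
    rw [Algebra.traceMatrix_eq_embeddingsMatrixReindex_mul_trans ℚ ℂ b e]
    rfl
  have hdet : IsUnit E.det := by
    have h1 : (E * Eᵀ).det ≠ 0 := by
      rw [hE]
      have := Algebra.discr_not_zero_of_basis ℚ b
      rw [Algebra.discr_def] at this
      have h2 := RingHom.map_det (algebraMap ℚ ℂ) (Algebra.traceMatrix ℚ b)
      rw [RingHom.mapMatrix_apply] at h2
      rw [← h2]
      exact (map_ne_zero _).mpr this
    rw [Matrix.det_mul, Matrix.det_transpose] at h1
    exact (isUnit_iff_ne_zero.mpr (left_ne_zero_of_mul h1))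
  -- common denominator
  obtain ⟨F, hF⟩ : ∃ F : S × Fin r × Fin r → ℚ, ∀ p, F p =
      Algebra.trace ℚ K (b p.2.1 * ⟨p.1.1, hSK _ p.1.2⟩ * b p.2.2) := ⟨_, fun _ => rfl⟩
  obtain ⟨d, hd⟩ := IsLocalization.exist_integer_multiples_of_finset (nonZeroDivisors ℤ)
    (Finset.univ.image F)
  have hd0 : ((d : ℤ) : ℂ) ≠ 0 := by exact_mod_cast nonZeroDivisors.ne_zero d.2
  refine ⟨r, e.symm j0, s, ((d : ℤ) : ℂ) • E, ((d : ℤ) : ℂ)⁻¹ • E⁻¹, Eᵀ, (Eᵀ)⁻¹, ?_, ?_, ?_, ?_, ?_⟩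
  · rw [Matrix.smul_mul, Matrix.mul_smul, smul_smul, inv_mul_cancel₀ hd0, one_smul,
      Matrix.nonsing_inv_mul _ hdet]
  · exact Matrix.mul_nonsing_inv _ (by rwa [Matrix.det_transpose])
  · intro k
    have : (0:ℂ) ∈ K := zero_mem _
    simp only [s, this, dif_pos]
    exact map_zero (e k)
  · intro z hz
    simp only [s, hSK z hz, dif_pos]
    rw [Equiv.apply_symm_apply, hj0]
  · intro z hz i j
    obtain ⟨m, hm⟩ := hd _ (Finset.mem_image_of_mem F (Finset.mem_univ (⟨z, hz⟩, i, j)))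
    rw [hF] at hm
    simp only at hm
    refine ⟨m, ?_⟩
    have h1 := congrArg (algebraMap ℚ ℂ) hm
    have h2 := trace_eq_sum_embeddings (K := ℚ) (E := ℂ) (x := b i * ⟨z, hSK z hz⟩ * b j)
    have h3 : algebraMap ℚ ℂ ((d : ℤ) • Algebra.trace ℚ K (b i * ⟨z, hSK z hz⟩ * b j)) =
      ((d : ℤ) : ℂ) * algebraMap ℚ ℂ (Algebra.trace ℚ K (b i * ⟨z, hSK z hz⟩ * b j)) := by
      rw [zsmul_eq_mul, map_mul]; simp
    rw [h3, h2, ← e.sum_comp] at h1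
    have h4 : algebraMap ℚ ℂ (algebraMap ℤ ℚ m) = (m : ℂ) := by simp
    rw [← h4, h1, Finset.mul_sum]
    refine Finset.sum_congr rfl fun k _ => ?_
    simp only [s, hSK z hz, dif_pos, Matrix.smul_apply, Matrix.transpose_apply, E, Matrix.of_apply,
      map_mul, smul_eq_mul]
    ring

section act
variable {R H' : Type*} [Ring R] [Algebra ℂ R] [NormedAddCommGroup H'] [InnerProductSpace ℂ H']
  {n : ℕ} (π : R →ₐ[ℂ] (H' →L[ℂ] H'))

lemma matAct_apply (a : Matrix (Fin n) (Fin n) R) (v : PiLp 2 (fun _ : Fin n => H')) (i : Fin n) :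
    matAct π a v i = ∑ j, π (a i j) (v j) := by
  simp [matAct]

lemma matAct_one : matAct π (1 : Matrix (Fin n) (Fin n) R) = 1 := by
  ext v i
  rw [matAct_apply, Finset.sum_eq_single i]
  · simp
  · intro j _ hj
    simp [Matrix.one_apply_ne hj.symm]
  · simp

lemma matAct_mul (a b : Matrix (Fin n) (Fin n) R) :
    matAct π (a * b) = matAct π a * matAct π b := by
  ext v i
  change _ = matAct π a (matAct π b v) i
  rw [matAct_apply, matAct_apply]
  simp only [matAct_apply, Matrix.mul_apply, map_sum, map_mul, _root_.sum_apply]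
  rw [Finset.sum_comm]
  rfl

lemma matAct_pow (a : Matrix (Fin n) (Fin n) R) (k : ℕ) :
    matAct π (a ^ k) = matAct π a ^ k := by
  induction k with
  | zero => rw [pow_zero, pow_zero, matAct_one]
  | succ k ih => rw [pow_succ, pow_succ, matAct_mul, ih]

lemma matAct_star [CompleteSpace H'] (a a' : Matrix (Fin n) (Fin n) R)
    (h : ∀ i j, star (π (a i j)) = π (a' j i)) : star (matAct π a) = matAct π a' := by
  symm
  rw [ContinuousLinearMap.star_eq_adjoint, ContinuousLinearMap.eq_adjoint_iff]
  intro x y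
  simp only [PiLp.inner_apply, matAct_apply, sum_inner, inner_sum]
  rw [Finset.sum_comm]
  refine Finset.sum_congr rfl fun j _ => Finset.sum_congr rfl fun i _ => ?_
  rw [← h, ContinuousLinearMap.star_eq_adjoint, ContinuousLinearMap.adjoint_inner_left]

lemma matAct_norm_le (a : Matrix (Fin n) (Fin n) R) :
    ‖matAct π a‖ ≤ ∑ i, ∑ j, ‖π (a i j)‖ := by
  refine ContinuousLinearMap.opNorm_le_bound _ (by positivity) fun v => ?_
  have h1 : ∀ w : PiLp 2 (fun _ : Fin n => H'), ‖w‖ ≤ ∑ i, ‖w i‖ := by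
    intro w
    rw [PiLp.norm_eq_of_L2]
    refine Real.sqrt_le_iff.mpr ⟨by positivity, ?_⟩
    exact Finset.sum_sq_le_sq_sum_of_nonneg fun i _ => norm_nonneg _
  refine (h1 _).trans ?_
  rw [Finset.sum_mul]
  refine Finset.sum_le_sum fun i _ => ?_
  rw [matAct_apply, Finset.sum_mul]
  refine (norm_sum_le _ _).trans (Finset.sum_le_sum fun j _ => ?_)
  refine (ContinuousLinearMap.le_opNorm _ _).trans ?_
  gcongr
  exact PiLp.norm_apply_le v j
end act

section rep
variable {G : Type*} [Group G] {φ : G → ℂ} (R : GNSRep G φ)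

/-- the l1 norm -/
def l1n (x : MonoidAlgebra ℂ G) : ℝ := ∑ g ∈ x.coeff.support, ‖x.coeff g‖

lemma GNSRep.norm_of_le (g : G) : ‖R.π (MonoidAlgebra.of ℂ G g)‖ ≤ 1 := by
  have h : star (R.π (MonoidAlgebra.of ℂ G g)) * R.π (MonoidAlgebra.of ℂ G g) = 1 := by
    rw [R.star_of, ← map_mul, ← map_mul, inv_mul_cancel, map_one, map_one]
  have h2 := CStarRing.norm_star_mul_self (x := R.π (MonoidAlgebra.of ℂ G g))
  rw [h] at h2
  have h3 : ‖(1 : R.H →L[ℂ] R.H)‖ ≤ 1 := ContinuousLinearMap.norm_id_le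
  nlinarith [norm_nonneg (R.π (MonoidAlgebra.of ℂ G g))]

lemma GNSRep.norm_le (x : MonoidAlgebra ℂ G) : ‖R.π x‖ ≤ l1n x := by
  have hx : x = ∑ g ∈ x.coeff.support, x.coeff g • MonoidAlgebra.of ℂ G g := by
    conv_lhs => rw [← MonoidAlgebra.sum_coeff_single x]
    rw [Finsupp.sum]
    refine Finset.sum_congr rfl fun g _ => ?_
    simp [MonoidAlgebra.of_apply]
  conv_lhs => rw [hx]
  rw [map_sum, l1n]
  refine (norm_sum_le _ _).trans (Finset.sum_le_sum fun g _ => ?_)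
  rw [map_smul, norm_smul]
  exact mul_le_of_le_one_right (norm_nonneg _) (R.norm_of_le g)

lemma GNSRep.exists_star (x : MonoidAlgebra ℂ G) : ∃ y, star (R.π x) = R.π y := by
  induction x using MonoidAlgebra.induction_linear with
  | zero => exact ⟨0, by simp⟩
  | add x y hx hy =>
    obtain ⟨x', hx⟩ := hx
    obtain ⟨y', hy⟩ := hy
    exact ⟨x' + y', by rw [map_add, star_add, hx, hy, map_add]⟩
  | single g c =>
    refine ⟨star c • MonoidAlgebra.of ℂ G g⁻¹, ?_⟩
    have : MonoidAlgebra.single g c = c • MonoidAlgebra.of ℂ G g := by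
      simp [MonoidAlgebra.of_apply]
    rw [this, map_smul, star_smul, R.star_of, map_smul]

/-- adjoint -/
def GNSRep.dg (x : MonoidAlgebra ℂ G) : MonoidAlgebra ℂ G := (R.exists_star x).choose
lemma GNSRep.dg_spec (x : MonoidAlgebra ℂ G) : star (R.π x) = R.π (R.dg x) :=
  (R.exists_star x).choose_spec

/-- state -/
def GNSRep.st (x : MonoidAlgebra ℂ G) : ℂ := inner ℂ R.ξ (R.π x R.ξ)

lemma GNSRep.st_add (x y) : R.st (x + y) = R.st x + R.st y := by
  simp [GNSRep.st, inner_add_right]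
lemma GNSRep.st_zero : R.st 0 = 0 := by simp [GNSRep.st]
lemma GNSRep.st_smul (c : ℂ) (x) : R.st (c • x) = c * R.st x := by
  simp [GNSRep.st, inner_smul_right]
lemma GNSRep.st_sum {ι : Type*} (s : Finset ι) (f : ι → MonoidAlgebra ℂ G) :
    R.st (∑ i ∈ s, f i) = ∑ i ∈ s, R.st (f i) := by
  simp [GNSRep.st, inner_sum]

lemma GNSRep.st_comm (hφ : IsGroupTrace φ) (x y : MonoidAlgebra ℂ G) :
    R.st (x * y) = R.st (y * x) := by
  have hs : ∀ (g : G) (c : ℂ), MonoidAlgebra.single g c = c • MonoidAlgebra.of ℂ G g := by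
    intro g c; simp [MonoidAlgebra.of_apply]
  induction x using MonoidAlgebra.induction_linear with
  | zero => simp
  | add x x' hx hy => rw [add_mul, mul_add, st_add, st_add, hx, hy]
  | single g c =>
    induction y using MonoidAlgebra.induction_linear with
    | zero => simp
    | add x x' hx hy => rw [add_mul, mul_add, st_add, st_add, hx, hy]
    | single h d =>
      rw [hs, hs, smul_mul_smul_comm, smul_mul_smul_comm, st_smul, st_smul, ← map_mul, ← map_mul,
        mul_comm d c]
      congr 1
      unfold GNSRep.st
      rw [R.inner_eq, R.inner_eq, ← hφ.2 (g * h) h]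
      congr 1
      group

lemma GNSRep.inner_vec {n : ℕ} (a : Matrix (Fin n) (Fin n) (MonoidAlgebra ℂ G)) (i : Fin n) :
    inner ℂ (R.vec i) (matAct R.π a (R.vec i)) = R.st (a i i) := by
  have hv : ∀ j, (R.vec i : PiLp 2 (fun _ : Fin n => R.H)) j = if j = i then R.ξ else 0 := by
    intro j
    simp [GNSRep.vec, Pi.single_apply]
  rw [PiLp.inner_apply, Finset.sum_eq_single i, matAct_apply, Finset.sum_eq_single i]
  · simp only [hv, if_true]; rfl
  · intro j _ hj
    simp [hv, hj]
  · simp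
  · intro j _ hj
    simp [hv, hj]
  · simp

/-- vector functional -/
def GNSRep.tl {n : ℕ} (i : Fin n) :
    (PiLp 2 (fun _ : Fin n => R.H) →L[ℂ] PiLp 2 (fun _ : Fin n => R.H)) →L[ℝ] ℝ :=
  Complex.reCLM.comp (((innerSL ℂ (R.vec i)).comp
    (ContinuousLinearMap.apply ℂ _ (R.vec i))).restrictScalars ℝ)

lemma GNSRep.tl_apply {n : ℕ} (i : Fin n) (T) :
    R.tl i T = (inner ℂ (R.vec i) (T (R.vec i)) : ℂ).re := rfl

/-- trace functional -/
def GNSRep.ta {n : ℕ} :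
    (PiLp 2 (fun _ : Fin n => R.H) →L[ℂ] PiLp 2 (fun _ : Fin n => R.H)) →L[ℝ] ℝ :=
  ∑ i, R.tl i

lemma GNSRep.ta_apply {n : ℕ}
    (T : (PiLp 2 (fun _ : Fin n => R.H) →L[ℂ] PiLp 2 (fun _ : Fin n => R.H))) :
    R.ta T = ∑ i, R.tl i T := by
  rw [GNSRep.ta, _root_.sum_apply]

lemma GNSRep.ta_matAct_comm (hφ : IsGroupTrace φ) {n : ℕ}
    (a b : Matrix (Fin n) (Fin n) (MonoidAlgebra ℂ G)) :
    R.ta (matAct R.π (a * b)) = R.ta (matAct R.π (b * a)) := by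
  simp only [ta_apply, tl_apply, inner_vec]
  rw [← Complex.re_sum, ← Complex.re_sum]
  congr 1
  simp only [Matrix.mul_apply, R.st_sum]
  rw [Finset.sum_comm]
  exact Finset.sum_congr rfl fun i _ => Finset.sum_congr rfl fun j _ => R.st_comm hφ _ _

lemma GNSRep.tl_mono {n : ℕ} (i : Fin n)
    (S T : PiLp 2 (fun _ : Fin n => R.H) →L[ℂ] PiLp 2 (fun _ : Fin n => R.H)) (h : S ≤ T) :
    R.tl i S ≤ R.tl i T := by
  rw [ContinuousLinearMap.le_def] at h
  have := h.re_inner_nonneg_right (R.vec i)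
  rw [_root_.sub_apply, inner_sub_right, map_sub] at this
  rw [tl_apply, tl_apply]
  exact sub_nonneg.mp this

lemma GNSRep.ta_mono {n : ℕ}
    (S T : PiLp 2 (fun _ : Fin n => R.H) →L[ℂ] PiLp 2 (fun _ : Fin n => R.H)) (h : S ≤ T) :
    R.ta S ≤ R.ta T := by
  rw [ta_apply, ta_apply]
  exact Finset.sum_le_sum fun i _ => R.tl_mono i S T h

lemma GNSRep.ta_one (h1 : φ 1 = 1) {n : ℕ} :
    R.ta (1 : PiLp 2 (fun _ : Fin n => R.H) →L[ℂ] PiLp 2 (fun _ : Fin n => R.H)) = n := by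
  rw [← matAct_one R.π, ta_apply]
  have : R.st 1 = 1 := by
    have := R.inner_eq 1
    rw [map_one, h1] at this
    exact this
  simp [tl_apply, inner_vec, this]
end rep

section cst
variable {A : Type*} [CStarAlgebra A] [PartialOrder A] [StarOrderedRing A]

lemma aux_sa_smul (c : ℝ) (T : A) (h : IsSelfAdjoint T) : IsSelfAdjoint (c • T) :=
  (IsSelfAdjoint.all c).smul h

lemma aux_smul_le (c : ℝ) (hc : 0 ≤ c) (S T : A) (h : S ≤ T) : c • S ≤ c • T :=
  smul_le_smul_of_nonneg_left h hc

lemma aux_smul_nonneg (c : ℝ) (hc : 0 ≤ c) (S : A) (h : 0 ≤ S) : 0 ≤ c • S :=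
  smul_nonneg hc h

lemma aux_smul_le_right (c d : ℝ) (hc : c ≤ d) (S : A) (h : 0 ≤ S) : c • S ≤ d • S :=
  smul_le_smul_of_nonneg_right hc h
end cst
section cmp
variable {G : Type*} [Group G] {φ : G → ℂ} (R : GNSRep G φ) {n : ℕ}

/-- adjoint matrix -/
def GNSRep.dgm (a : Matrix (Fin n) (Fin n) (MonoidAlgebra ℂ G)) :
    Matrix (Fin n) (Fin n) (MonoidAlgebra ℂ G) := Matrix.of fun i j => R.dg (a j i)

lemma GNSRep.dgm_spec (a : Matrix (Fin n) (Fin n) (MonoidAlgebra ℂ G)) :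
    star (matAct R.π a) = matAct R.π (R.dgm a) :=
  matAct_star R.π a _ fun i j => by rw [dg_spec]; rfl

lemma GNSRep.ta_cfc_comm (hφ : IsGroupTrace φ) (a : Matrix (Fin n) (Fin n) (MonoidAlgebra ℂ G))
    (c : ℝ) (f : ℝ → ℝ) (hf : Continuous f) :
    R.ta (cfc f (c • (star (matAct R.π a) * matAct R.π a))) =
      R.ta (cfc f (c • (matAct R.π a * star (matAct R.π a)))) := by
  refine aux_cfc_agree _ _ ?_ ?_ _ _ ?_ f hf
  · exact aux_sa_smul _ _ (IsSelfAdjoint.star_mul_self _)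
  · exact aux_sa_smul _ _ (IsSelfAdjoint.mul_star_self _)
  intro k
  rw [smul_pow, smul_pow, map_smul, map_smul]
  congr 1
  rw [dgm_spec, ← matAct_mul, ← matAct_mul, ← matAct_pow, ← matAct_pow]
  cases k with
  | zero => simp
  | succ k =>
    have e1 : (R.dgm a * a) ^ (k + 1) = R.dgm a * ((a * R.dgm a) ^ k * a) := by
      have : ∀ k : ℕ, (R.dgm a * a) ^ k * R.dgm a = R.dgm a * (a * R.dgm a) ^ k := by
        intro k
        induction k with
        | zero => simp
        | succ k ih => rw [pow_succ', mul_assoc, ih, pow_succ']; simp only [mul_assoc]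
      rw [pow_succ, ← mul_assoc, this, mul_assoc]
    rw [e1, R.ta_matAct_comm hφ, mul_assoc, ← pow_succ]

lemma GNSRep.cmp (hφ : IsGroupTrace φ) (f : ℝ → ℝ) (hf : Continuous f)
    (hmono : ∀ S T : PiLp 2 (fun _ : Fin n => R.H) →L[ℂ] PiLp 2 (fun _ : Fin n => R.H),
      0 ≤ S → S ≤ T → cfc f S ≤ cfc f T)
    (A X B Y : Matrix (Fin n) (Fin n) (MonoidAlgebra ℂ G)) (hA : A = X * B * Y)
    (c κ x y : ℝ) (hc : 0 ≤ c) (hx : ‖matAct R.π X‖ ≤ x) (hy : ‖matAct R.π Y‖ ≤ y)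
    (hκ : x ^ 2 * y ^ 2 ≤ κ) :
    R.ta (cfc f (c • (star (matAct R.π A) * matAct R.π A))) ≤
      R.ta (cfc f ((c * κ) • (star (matAct R.π B) * matAct R.π B))) := by
  set Xo := matAct R.π X
  set Yo := matAct R.π Y with hYo
  set Bo := matAct R.π B with hBo
  have hAo : matAct R.π A = Xo * (Bo * Yo) := by rw [hA, matAct_mul, matAct_mul, mul_assoc]
  have hZ : Bo * Yo = matAct R.π (B * Y) := by rw [matAct_mul]
  have hx0 : 0 ≤ x := (norm_nonneg _).trans hx
  have hy0 : 0 ≤ y := (norm_nonneg _).trans hy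
  have s1 : star (matAct R.π A) * matAct R.π A ≤ x ^ 2 • (star (Bo * Yo) * (Bo * Yo)) := by
    have h1 : star Xo * Xo ≤ algebraMap ℝ _ (x ^ 2) :=
      CStarAlgebra.star_mul_le_algebraMap_norm_sq.trans
        (algebraMap_mono _ (by gcongr))
    have h2 := star_left_conjugate_le_conjugate h1 (Bo * Yo)
    rw [hAo, star_mul]
    calc _ = star (Bo * Yo) * (star Xo * Xo) * (Bo * Yo) := by simp only [mul_assoc]
      _ ≤ _ := h2
      _ = _ := by rw [Algebra.algebraMap_eq_smul_one, mul_smul_comm, mul_one, smul_mul_assoc]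
  have s2 : (Bo * Yo) * star (Bo * Yo) ≤ y ^ 2 • (Bo * star Bo) := by
    have h1 : Yo * star Yo ≤ algebraMap ℝ _ (y ^ 2) :=
      CStarAlgebra.mul_star_le_algebraMap_norm_sq.trans
        (algebraMap_mono _ (by gcongr))
    have h2 := star_right_conjugate_le_conjugate h1 Bo
    rw [star_mul]
    calc _ = Bo * (Yo * star Yo) * star Bo := by simp only [mul_assoc]
      _ ≤ _ := h2
      _ = _ := by rw [Algebra.algebraMap_eq_smul_one, mul_smul_comm, mul_one, smul_mul_assoc]
  calc _ ≤ R.ta (cfc f ((c * x ^ 2) • (star (Bo * Yo) * (Bo * Yo)))) := by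
        refine R.ta_mono _ _ (hmono _ _ (aux_smul_nonneg _ hc _ (star_mul_self_nonneg _)) ?_)
        rw [mul_smul]
        exact aux_smul_le _ hc _ _ s1
    _ = R.ta (cfc f ((c * x ^ 2) • ((Bo * Yo) * star (Bo * Yo)))) := by
        rw [hZ, R.ta_cfc_comm hφ _ _ f hf]
    _ ≤ R.ta (cfc f ((c * κ) • (Bo * star Bo))) := by
        refine R.ta_mono _ _ (hmono _ _ (aux_smul_nonneg _ (by positivity) _ (mul_star_self_nonneg _)) ?_)
        calc _ ≤ (c * x ^ 2) • (y ^ 2 • (Bo * star Bo)) :=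
              aux_smul_le _ (by positivity) _ _ s2
          _ = (c * (x ^ 2 * y ^ 2)) • (Bo * star Bo) := by rw [smul_smul, mul_assoc]
          _ ≤ _ := aux_smul_le_right _ _ (by gcongr) _ (mul_star_self_nonneg _)
    _ = _ := by rw [hBo, R.ta_cfc_comm hφ _ _ f hf]

lemma GNSRep.ta_cfc_le (h1 : φ 1 = 1) (f g : ℝ → ℝ) (hf : Continuous f) (hg : Continuous g)
    (T : PiLp 2 (fun _ : Fin n => R.H) →L[ℂ] PiLp 2 (fun _ : Fin n => R.H)) (M C : ℝ)
    (hT : ‖T‖ ≤ M)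
    (h : ∀ t ∈ Set.Icc 0 M, f (t ^ 2) ≤ g (t ^ 2) + C) :
    R.ta (cfc f (star T * T)) ≤ R.ta (cfc g (star T * T)) + C * n := by
  have e : cfc (fun s => g s + C) (star T * T) =
      cfc g (star T * T) + C • 1 := by
    rw [cfc_add_const C g _ hg.continuousOn, Algebra.algebraMap_eq_smul_one]
  have : R.ta (cfc f (star T * T)) ≤ R.ta (cfc (fun s => g s + C) (star T * T)) := by
    refine R.ta_mono _ _ (cfc_mono ?_ hf.continuousOn (by fun_prop))
    intro s hs
    have hs0 : 0 ≤ s := spectrum_nonneg_of_nonneg (star_mul_self_nonneg T) hs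
    have hs1 := spectrum.norm_le_norm_mul_of_mem hs
    have h3 : ‖(1 : PiLp 2 (fun _ : Fin n => R.H) →L[ℂ] PiLp 2 (fun _ : Fin n => R.H))‖ ≤ 1 :=
      ContinuousLinearMap.norm_id_le
    have hs2 : s ≤ ‖T‖ * ‖T‖ := by
      rw [← CStarRing.norm_star_mul_self]
      rw [Real.norm_eq_abs, abs_of_nonneg hs0] at hs1
      exact hs1.trans (mul_le_of_le_one_right (norm_nonneg _) h3)
    have := h (√s) ⟨Real.sqrt_nonneg s, Real.sqrt_le_iff.mpr
      ⟨(norm_nonneg T).trans hT, hs2.trans (by nlinarith [norm_nonneg T])⟩⟩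
    rwa [Real.sq_sqrt hs0] at this
  rw [e, map_add, map_smul, R.ta_one h1] at this
  simpa using this

lemma aux_cfc_abs {A : Type*} [CStarAlgebra A] (T : A) (g : ℝ → ℝ)
    (hg : ContinuousOn g (Set.Ici 0)) :
    cfc g (cfcAbs T) = cfc (fun s => g (√s)) (star T * T) := by
  have : ContinuousOn g (Real.sqrt '' spectrum ℝ (star T * T)) :=
    hg.mono (by rintro _ ⟨x, _, rfl⟩; exact Real.sqrt_nonneg x)
  rw [cfcAbs, ← cfc_comp' g Real.sqrt (star T * T) this]

lemma aux_cont_sqrt (g : ℝ → ℝ) (hg : ContinuousOn g (Set.Ici 0)) :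
    Continuous (fun s => g (√s)) :=
  hg.comp_continuous Real.continuous_sqrt fun x => Real.sqrt_nonneg x

lemma GNSRep.le_lnPlusQ_iff (a : Matrix (Fin n) (Fin n) (MonoidAlgebra ℂ G)) (m : ℝ) :
    (m : EReal) ≤ R.lnPlusQ a ↔ ∀ g ∈ lnPlusMajorants,
      m ≤ R.ta (cfc (fun s => g (√s)) (star (matAct R.π a) * matAct R.π a)) := by
  rw [GNSRep.lnPlusQ, le_iInf₂_iff]
  refine forall₂_congr fun g hg => ?_
  rw [EReal.coe_le_coe_iff, ta_apply, aux_cfc_abs _ g hg.1, Complex.re_sum]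
  rfl

variable {r N : ℕ} (e : Fin n × Fin r ≃ Fin N)

lemma GNSRep.ta_block (D : Fin r → Matrix (Fin n) (Fin n) (MonoidAlgebra ℂ G))
    (f : ℝ → ℝ) (hf : Continuous f) (Dm : Matrix (Fin N) (Fin N) (MonoidAlgebra ℂ G))
    (hDm : Dm = Matrix.reindexAlgEquiv ℂ (MonoidAlgebra ℂ G) e (Matrix.blockDiagonal D)) :
    R.ta (cfc f (star (matAct R.π Dm) * matAct R.π Dm)) =
      ∑ k, R.ta (cfc f (star (matAct R.π (D k)) * matAct R.π (D k))) := by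
  have key : ∀ i k, R.tl (e (i, k)) (cfc f (star (matAct R.π Dm) * matAct R.π Dm)) =
      R.tl i (cfc f (star (matAct R.π (D k)) * matAct R.π (D k))) := by
    intro i k
    refine aux_cfc_agree _ _ (IsSelfAdjoint.star_mul_self _) (IsSelfAdjoint.star_mul_self _)
      _ _ ?_ f hf
    intro l
    have hs : star (matAct R.π Dm) = matAct R.π (Matrix.reindexAlgEquiv ℂ (MonoidAlgebra ℂ G) e
        (Matrix.blockDiagonal fun k => R.dgm (D k))) := by
      apply matAct_star
      intro p q
      rw [hDm]
      simp only [Matrix.coe_reindexAlgEquiv, Matrix.reindex_apply, Matrix.submatrix_apply,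
        Matrix.blockDiagonal_apply]
      by_cases h : (e.symm p).2 = (e.symm q).2
      · rw [if_pos h, if_pos h.symm, dg_spec, ← h]; rfl
      · rw [if_neg h, if_neg (Ne.symm h), map_zero, star_zero]
    rw [hs, dgm_spec, hDm, ← matAct_mul, ← matAct_mul, ← map_mul, ← matAct_pow, ← matAct_pow,
      ← map_pow, ← Matrix.blockDiagonal_mul, ← Matrix.blockDiagonal_pow, tl_apply, tl_apply,
      inner_vec, inner_vec]
    rw [Matrix.coe_reindexAlgEquiv, Matrix.reindex_apply, Matrix.submatrix_apply,
      Equiv.symm_apply_apply, Matrix.blockDiagonal_apply_eq]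
    rfl
  simp only [ta_apply]
  rw [← e.sum_comp, Fintype.sum_prod_type, Finset.sum_comm]
  exact Finset.sum_congr rfl fun k _ => Finset.sum_congr rfl fun i _ => key i k
end cmp

lemma aux_alg {G : Type*} [Group G] (n : ℕ) (a : Matrix (Fin n) (Fin n) (MonoidAlgebra ℂ G))
    (halg : ∀ (i j : Fin n) (g : G), IsAlgebraic ℚ ((a i j).coeff g)) :
    ∃ (r : ℕ) (k0 : Fin r) (D : Fin r → Matrix (Fin n) (Fin n) (MonoidAlgebra ℂ G))
      (Dm A X Y X' Y' : Matrix (Fin (n * r)) (Fin (n * r)) (MonoidAlgebra ℂ G)),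
      D k0 = a ∧
      Dm = Matrix.reindexAlgEquiv ℂ (MonoidAlgebra ℂ G) finProdFinEquiv
        (Matrix.blockDiagonal D) ∧
      A = X * Dm * Y ∧ Dm = X' * A * Y' ∧
      ∀ (i j : Fin (n * r)) (g : G), ∃ m : ℤ, (A i j).coeff g = (m : ℂ) := by
  classical
  let S : Finset ℂ := insert 0 (Finset.univ.biUnion fun p : Fin n × Fin n =>
    (a p.1 p.2).coeff.support.image fun g => (a p.1 p.2).coeff g)
  have hmem : ∀ i j g, (a i j).coeff g ∈ S := by
    intro i j g
    by_cases h : (a i j).coeff g = 0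
    · rw [h]; exact Finset.mem_insert_self _ _
    · refine Finset.mem_insert_of_mem (Finset.mem_biUnion.mpr ⟨(i, j), Finset.mem_univ _, ?_⟩)
      exact Finset.mem_image.mpr ⟨g, Finsupp.mem_support_iff.mpr h, rfl⟩
  have hS : ∀ z ∈ S, IsAlgebraic ℚ z := by
    intro z hz
    rcases Finset.mem_insert.mp hz with rfl | hz
    · exact isAlgebraic_zero
    · obtain ⟨p, _, hp⟩ := Finset.mem_biUnion.mp hz
      obtain ⟨g, _, rfl⟩ := Finset.mem_image.mp hp
      exact halg _ _ _
  obtain ⟨r, k0, s, W, W', V, V', hW, hV, hs0, hsk, hint⟩ := aux_nt S hS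
  let D : Fin r → Matrix (Fin n) (Fin n) (MonoidAlgebra ℂ G) := fun k => Matrix.of fun i j =>
    MonoidAlgebra.ofCoeff ((a i j).coeff.mapRange (s k) (hs0 k))
  have hD : ∀ k i j g, (D k i j).coeff g = s k ((a i j).coeff g) := by
    intro k i j g
    simp [D]
  let e : Fin n × Fin r ≃ Fin (n * r) := finProdFinEquiv
  let lift : Matrix (Fin r) (Fin r) ℂ → Matrix (Fin (n * r)) (Fin (n * r)) (MonoidAlgebra ℂ G) :=
    fun U => Matrix.reindexAlgEquiv ℂ (MonoidAlgebra ℂ G) e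
      ((algebraMap ℂ (MonoidAlgebra ℂ G)).mapMatrix
        (Matrix.kroneckerMap (· * ·) (1 : Matrix (Fin n) (Fin n) ℂ) U))
  have hlift : ∀ U U', U * U' = 1 → lift U * lift U' = 1 := by
    intro U U' h
    simp only [lift]
    rw [← map_mul, ← map_mul, ← Matrix.mul_kronecker_mul, h, one_mul, Matrix.one_kronecker_one,
      map_one, map_one]
  let Dm := Matrix.reindexAlgEquiv ℂ (MonoidAlgebra ℂ G) e (Matrix.blockDiagonal D)
  refine ⟨r, k0, D, Dm, lift W * Dm * lift V, lift W, lift V, lift W', lift V', ?_, rfl, rfl,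
    ?_, ?_⟩
  · ext i j g
    rw [hD, hsk _ (hmem i j g)]
  · calc Dm = (lift W' * lift W) * Dm * (lift V * lift V') := by
          rw [hlift _ _ hW, hlift _ _ hV, one_mul, mul_one]
      _ = _ := by simp only [mul_assoc]
  · intro p q g
    obtain ⟨⟨p, i⟩, rfl⟩ := e.surjective p
    obtain ⟨⟨q, j⟩, rfl⟩ := e.surjective q
    obtain ⟨m, hm⟩ := hint _ (hmem p q g) i j
    refine ⟨m, ?_⟩
    rw [← hm]
    have h1 : (lift W * Dm * lift V) (e (p, i)) (e (q, j)) =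
        ∑ k, (W i k * V k j) • D k p q := by
      simp only [lift, Dm]
      rw [← map_mul, ← map_mul, Matrix.coe_reindexAlgEquiv, Matrix.reindex_apply,
        Matrix.submatrix_apply, Equiv.symm_apply_apply, Equiv.symm_apply_apply]
      simp only [Matrix.mul_apply, Fintype.sum_prod_type, RingHom.mapMatrix_apply,
        Matrix.map_apply, Matrix.kroneckerMap_apply, Matrix.blockDiagonal_apply, Matrix.one_apply]
      simp only [ite_mul, mul_ite, one_mul, zero_mul, mul_zero, Finset.sum_ite_eq,
        Finset.sum_ite_eq', Finset.mem_univ, if_true, Finset.sum_mul,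
        MonoidAlgebra.coe_algebraMap, Algebra.algebraMap_self, RingHom.id_apply,
        Function.comp_apply]
      have hsg : ∀ c : ℂ, (MonoidAlgebra.single 1 c : MonoidAlgebra ℂ G) = c • 1 := by
        intro c
        simp [MonoidAlgebra.one_def]
      rw [Finset.sum_eq_single q]
      · refine Finset.sum_congr rfl fun k _ => ?_
        rw [Finset.sum_eq_single p]
        · rw [if_pos rfl, if_pos rfl, hsg, hsg, smul_mul_assoc, one_mul, mul_smul_comm, mul_one,
            smul_smul, mul_comm]
        · intro x _ hx
          rw [if_neg (Ne.symm hx), hsg, zero_smul, zero_mul, zero_mul]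
        · simp
      · intro x _ hx
        simp [hx]
      · simp
    rw [h1]
    simp only [MonoidAlgebra.coeff_sum, MonoidAlgebra.coeff_smul, Finsupp.finsetSum_apply,
      Finsupp.smul_apply, hD, smul_eq_mul]
    exact Finset.sum_congr rfl fun k _ => by ring

/-- sum of coefficient norms of a matrix -/
def l1M {G : Type*} [Group G] {n : ℕ} (a : Matrix (Fin n) (Fin n) (MonoidAlgebra ℂ G)) : ℝ :=
  ∑ i, ∑ j, l1n (a i j)

lemma l1M_nonneg {G : Type*} [Group G] {n : ℕ}
    (a : Matrix (Fin n) (Fin n) (MonoidAlgebra ℂ G)) : 0 ≤ l1M a :=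
  Finset.sum_nonneg fun _ _ => Finset.sum_nonneg fun _ _ =>
    Finset.sum_nonneg fun _ _ => norm_nonneg _

lemma GNSRep.matAct_le {G : Type*} [Group G] {φ : G → ℂ} (R : GNSRep G φ) {n : ℕ}
    (a : Matrix (Fin n) (Fin n) (MonoidAlgebra ℂ G)) : ‖matAct R.π a‖ ≤ l1M a :=
  (matAct_norm_le R.π a).trans (Finset.sum_le_sum fun _ _ => Finset.sum_le_sum fun _ _ =>
    R.norm_le _)

lemma aux_maj (ε δ : ℝ) (hε : 0 < ε) (hε1 : ε < 1) (hδ : 0 < δ) :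
    (fun t : ℝ => (1/2 : ℝ) * (Real.log (|t ^ 2| + ε) - (-Real.log ε) * (-(δ / (|t ^ 2| + δ)))))
      ∈ lnPlusMajorants := by
  have hL : 0 ≤ -Real.log ε := by
    have := Real.log_nonpos hε.le hε1.le
    linarith
  constructor
  · apply Continuous.continuousOn
    have h1 : ∀ t : ℝ, |t ^ 2| + ε ≠ 0 := fun t => by positivity
    have h2 : ∀ t : ℝ, |t ^ 2| + δ ≠ 0 := fun t => by positivity
    fun_prop (disch := assumption)
  · intro t ht
    rcases eq_or_lt_of_le (show (0:ℝ) ≤ t from ht) with rfl | ht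
    · simp [hδ.ne']
    · have h1 : Real.log (t ^ 2) ≤ Real.log (|t ^ 2| + ε) :=
        Real.log_le_log (by positivity) (by rw [abs_of_nonneg (sq_nonneg t)]; linarith)
      have h3 : Real.log (t ^ 2) = 2 * Real.log t := by rw [Real.log_pow]; norm_num
      have h2 : 0 ≤ (-Real.log ε) * (δ / (|t ^ 2| + δ)) := by positivity
      simp only
      linarith

lemma aux_cfc_scale {A : Type*} [CStarAlgebra A] (T : A) (hT : IsSelfAdjoint T) (c : ℝ)
    (f : ℝ → ℝ) (hf : Continuous f) : cfc f (c • T) = cfc (fun s => f (c * s)) T :=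
  (cfc_comp_const_mul c f T hf.continuousOn hT).symm

lemma aux_lc {A : Type*} [CStarAlgebra A] (T : A) (hT : IsSelfAdjoint T) (c d : ℝ)
    (f g : ℝ → ℝ) (hf : Continuous f) (hg : Continuous g) (L : A →L[ℝ] ℝ) :
    L (cfc (fun s => c * (f s - d * g s)) T) = c * (L (cfc f T) - d * L (cfc g T)) := by
  rw [cfc_const_mul c (fun s => f s - d * g s) T (by fun_prop),
    cfc_sub f (fun s => d * g s) T (by fun_prop) (by fun_prop),
    cfc_const_mul d g T (by fun_prop), map_smul, map_sub, map_smul]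
  rfl

lemma aux_one_smul {A : Type*} [CStarAlgebra A] (T : A) : (1:ℝ) • T = T := one_smul ℝ T

theorem aux_main_s15 {G : Type*} [Group G] (n : ℕ) (hn : 0 < n)
    (a : Matrix (Fin n) (Fin n) (MonoidAlgebra ℂ G)) (r : ℕ) (k0 : Fin r)
    (D : Fin r → Matrix (Fin n) (Fin n) (MonoidAlgebra ℂ G))
    (Dm A X Y X' Y' : Matrix (Fin (n * r)) (Fin (n * r)) (MonoidAlgebra ℂ G))
    (hDa : D k0 = a)
    (hDm : Dm = Matrix.reindexAlgEquiv ℂ (MonoidAlgebra ℂ G) finProdFinEquiv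
        (Matrix.blockDiagonal D))
    (hA : A = X * Dm * Y) (hA' : Dm = X' * A * Y')
    (hint : ∀ (i j : Fin (n * r)) (g : G), ∃ m : ℤ, (A i j).coeff g = (m : ℂ)) :
    ∃ m : ℝ, ∀ φ : G → ℂ, IsGroupTrace φ → φ 1 = 1 → SatisfiesLueck φ →
      ∀ R : GNSRep G φ, (m : EReal) ≤ R.lnPlusQ a := by
  set κ : ℝ := 1 + l1M X ^ 2 * l1M Y ^ 2 + l1M X' ^ 2 * l1M Y' ^ 2 with hκd
  have p1 : 0 ≤ l1M X ^ 2 * l1M Y ^ 2 := by positivity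
  have p2 : 0 ≤ l1M X' ^ 2 * l1M Y' ^ 2 := by positivity
  have hκ : 1 ≤ κ := by linarith
  have hκ0 : 0 < κ := by linarith
  set M : ℝ := 1 + ∑ k, l1M (D k) with hMd
  have hDM : ∀ k, l1M (D k) ≤ M := fun k =>
    (Finset.single_le_sum (fun k _ => l1M_nonneg (D k)) (Finset.mem_univ k)).trans
      (by rw [hMd]; linarith)
  have hM : 1 ≤ M := by
    have : 0 ≤ ∑ k, l1M (D k) := Finset.sum_nonneg fun k _ => l1M_nonneg (D k)
    linarith
  have hlogM : 0 ≤ Real.log M := Real.log_nonneg hM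
  set C : ℝ := 1 + (1/2) * Real.log κ with hC
  have hC0 : 0 ≤ C := by have := Real.log_nonneg hκ; linarith
  refine ⟨-(r * (n * (Real.log M + C))), fun φ hφ h1 hL R => ?_⟩
  rw [R.le_lnPlusQ_iff]
  intro g hg
  obtain ⟨ε, δ, hε, hε1, hδ, hreal⟩ := aux_real g hg.1 hg.2 M κ hM hκ
  have hN : 0 < n * r := Nat.mul_pos hn (k0.pos)
  have hl := (R.le_lnPlusQ_iff A 0).mp (by simpa using hL _ hN A hint R) _
    (aux_maj ε δ hε hε1 hδ)
  set P := star (matAct R.π A) * matAct R.π A with hP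
  set Q := star (matAct R.π Dm) * matAct R.π Dm with hQ
  have hPs : IsSelfAdjoint P := IsSelfAdjoint.star_mul_self _
  have hQs : IsSelfAdjoint Q := IsSelfAdjoint.star_mul_self _
  let lg : ℝ → ℝ := fun s => Real.log (|s| + ε)
  let iv : ℝ → ℝ := fun s => -(δ / (|s| + δ))
  have hlg : Continuous lg := by
    have h1 : ∀ t : ℝ, |t| + ε ≠ 0 := fun t => by positivity
    simp only [lg]
    fun_prop (disch := assumption)
  have hiv : Continuous iv := by
    have h1 : ∀ t : ℝ, |t| + δ ≠ 0 := fun t => by positivity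
    simp only [iv]
    fun_prop (disch := assumption)
  have hLe : 0 ≤ -Real.log ε := by
    have := Real.log_nonpos hε.le hε1.le
    linarith
  have hl2 : 0 ≤ (1/2 : ℝ) * (R.ta (cfc lg P) - (-Real.log ε) * R.ta (cfc iv P)) := by
    rw [← aux_lc P hPs _ _ lg iv hlg hiv R.ta]
    refine hl.trans (le_of_eq (congrArg R.ta (cfc_congr ?_)))
    intro s hs
    have hs0 : 0 ≤ s := spectrum_nonneg_of_nonneg (star_mul_self_nonneg (matAct R.π A)) hs
    simp only [Real.sq_sqrt hs0, lg, iv]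
  have c1 : R.ta (cfc lg P) ≤ R.ta (cfc (fun s => lg (κ * s)) Q) := by
    have := R.cmp hφ lg hlg (fun S T hS hST => aux_log_mono ε hε S T hS hST) A X Dm Y hA 1 κ
      (l1M X) (l1M Y) zero_le_one (R.matAct_le X) (R.matAct_le Y) (by linarith)
    rw [one_mul, aux_one_smul] at this
    rwa [aux_cfc_scale _ hQs κ lg hlg] at this
  have c2 : R.ta (cfc (fun s => iv (κ⁻¹ * s)) Q) ≤ R.ta (cfc iv P) := by
    have := R.cmp hφ iv hiv (fun S T hS hST => aux_inv_mono δ hδ S T hS hST) Dm X' A Y' hA' κ⁻¹ κ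
      (l1M X') (l1M Y') (by positivity) (R.matAct_le X') (R.matAct_le Y') (by linarith)
    rw [inv_mul_cancel₀ hκ0.ne', aux_one_smul] at this
    rwa [aux_cfc_scale _ hQs κ⁻¹ iv hiv] at this
  let GG : ℝ → ℝ := fun s => (1/2 : ℝ) * (lg (κ * s) - (-Real.log ε) * iv (κ⁻¹ * s))
  have hGG : Continuous GG := by simp only [GG]; fun_prop
  have c3 : 0 ≤ R.ta (cfc GG Q) := by
    rw [aux_lc Q hQs _ _ (fun s => lg (κ * s)) (fun s => iv (κ⁻¹ * s)) (by fun_prop)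
      (by fun_prop) R.ta]
    nlinarith [mul_le_mul_of_nonneg_left c2 hLe]
  rw [R.ta_block finProdFinEquiv D GG hGG Dm hDm] at c3
  have hGr : ∀ t ∈ Set.Icc 0 M, GG (t ^ 2) ≤ min (g t) (Real.log M) + C := by
    intro t ht
    refine le_trans (le_of_eq ?_) (hreal t ht)
    simp only [GG, lg, iv]
    ring
  have hgc := aux_cont_sqrt g hg.1
  have d0 : R.ta (cfc GG (star (matAct R.π (D k0)) * matAct R.π (D k0))) ≤
      R.ta (cfc (fun s => g (√s)) (star (matAct R.π a) * matAct R.π a)) + C * n := by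
    rw [← hDa]
    refine R.ta_cfc_le h1 GG _ hGG hgc _ M C ((R.matAct_le _).trans (hDM k0)) ?_
    intro t ht
    rw [Real.sqrt_sq ht.1]
    exact (hGr t ht).trans (by gcongr; exact min_le_left _ _)
  have d1 : ∀ k, R.ta (cfc GG (star (matAct R.π (D k)) * matAct R.π (D k))) ≤
      n * (Real.log M + C) := by
    intro k
    have := R.ta_cfc_le h1 GG (fun _ => 0) hGG continuous_const (matAct R.π (D k)) M
      (Real.log M + C) ((R.matAct_le _).trans (hDM k)) (by
        intro t ht
        rw [zero_add]
        exact (hGr t ht).trans (by gcongr; exact min_le_right _ _))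
    rw [cfc_const_zero, map_zero, zero_add] at this
    linarith
  rw [← Finset.add_sum_erase _ _ (Finset.mem_univ k0)] at c3
  have d2 : ∑ k ∈ Finset.univ.erase k0,
      R.ta (cfc GG (star (matAct R.π (D k)) * matAct R.π (D k))) ≤
      (r - 1) * (n * (Real.log M + C)) := by
    refine (Finset.sum_le_sum fun k _ => d1 k).trans (le_of_eq ?_)
    rw [Finset.sum_const, Finset.card_erase_of_mem (Finset.mem_univ _), Finset.card_univ,
      Fintype.card_fin, nsmul_eq_mul, Nat.cast_sub k0.pos, Nat.cast_one]
  have : 0 ≤ (n:ℝ) * Real.log M := by positivity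
  linarith

/-- for `a ∈ Mₙ(ℚ̄ F_∞)` (viewed in `Mₙ(ℂ F_∞)`: all coefficients of `a`
are algebraic numbers), there is a constant `m` such that `(φ ⊗ Trₙ)(ln₊|a|) ≥ m` for
every tracial state `φ` on `F_∞` satisfying Lück's condition. -/
theorem stmt15 (n : ℕ) (hn : 0 < n)
    (a : Matrix (Fin n) (Fin n) (MonoidAlgebra ℂ (FreeGroup ℕ)))
    (halg : ∀ (i j : Fin n) (g : FreeGroup ℕ), IsAlgebraic ℚ ((a i j).coeff g)) :
    ∃ m : ℝ, ∀ φ : FreeGroup ℕ → ℂ, IsGroupTrace φ → φ 1 = 1 → SatisfiesLueck φ →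
      ∀ R : GNSRep (FreeGroup ℕ) φ, (m : EReal) ≤ R.lnPlusQ a := by
  obtain ⟨r, k0, D, Dm, A, X, Y, X', Y', h1, h2, h3, h4, h5⟩ := aux_alg n a halg
  exact aux_main_s15 n hn a r k0 D Dm A X Y X' Y' h1 h2 h3 h4 h5

end
end
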